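/- arXiv:1704.05373 — 3 statements merged into one kernel-verified Lean document; each statement's English description precedes it below -/
import Mathlib

section
/- Let a, b, c be positive real numbers satisfying the strict triangle inequalities a < b + c, b < a + c, c < a + b. Then 2·sinh(a/2)·sinh(b/2)·sinh(c/2)/(sinh((a+b-c)/2)·sinh((a+c-b)/2)·sinh((b+c-a)/2)) ≥ 2·sinh((a+b)/4)·sinh((a+c)/4)·sinh((b+c)/4)/(sinh(a/2)·sinh(b/2)·sinh(c/2)) ≥ 2, with equality throughout if and only if a = b = c. -/
theorem concaveOn_log_sinh :
    ConcaveOn ℝ (Set.Ioi 0) (fun x : ℝ => Real.log (Real.sinh x)) := by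
  have hderiv : ∀ x ∈ Set.Ioi (0 : ℝ),
      HasDerivAt (fun x : ℝ => Real.log (Real.sinh x)) (Real.cosh x / Real.sinh x) x :=
    fun x hx => (Real.hasDerivAt_sinh x).log (Real.sinh_pos_iff.2 hx).ne'
  refine AntitoneOn.concaveOn_of_deriv (convex_Ioi 0)
    (fun x hx => (hderiv x hx).continuousAt.continuousWithinAt) ?_ ?_
  · rw [interior_Ioi]
    exact fun x hx => (hderiv x hx).differentiableAt.differentiableWithinAt
  · rw [interior_Ioi]
    intro x hx y hy hxy
    rw [(hderiv x hx).deriv, (hderiv y hy).deriv,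
      div_le_div_iff₀ (Real.sinh_pos_iff.2 hy) (Real.sinh_pos_iff.2 hx)]
    have h := Real.sinh_nonneg_iff.2 (sub_nonneg.2 hxy)
    rw [Real.sinh_sub] at h
    linarith

theorem ConcaveOn.popoviciu_of_same_side {s : Set ℝ} {f : ℝ → ℝ} (hf : ConcaveOn ℝ s f)
    {x y z : ℝ} (hx : x ∈ s) (hy : y ∈ s) (hz : z ∈ s)
    (h : 0 ≤ (y - (x + y + z) / 3) * (z - (x + y + z) / 3)) :
    f x + f y + f z + 3 * f ((x + y + z) / 3) ≤
      2 * (f ((x + y) / 2) + f ((y + z) / 2) + f ((x + z) / 2)) := by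
  set m := (x + y + z) / 3 with hm
  have hms : m ∈ s := by
    have := hf.1.sum_mem (t := Finset.univ) (w := fun _ : Fin 3 => (1 / 3 : ℝ))
      (z := ![x, y, z]) (fun _ _ => by norm_num) (by simp) (by
        intro i _
        fin_cases i <;> assumption)
    convert this using 1
    simp [Fin.sum_univ_three, hm]
    ring
  obtain ⟨t, ht0, ht1, ht⟩ : ∃ t : ℝ, 0 ≤ t ∧ t ≤ 1 / 2 ∧ (x + z) / 2 = (1 - t) * m + t * x := by
    by_cases hvw : (y - m) + (z - m) = 0
    · refine ⟨0, le_rfl, by norm_num, ?_⟩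
      have hv : y - m = 0 := by nlinarith
      linarith
    · refine ⟨(y - m) * ((y - m) + (z - m)) / (2 * ((y - m) + (z - m)) ^ 2), ?_, ?_, ?_⟩
      · have : 0 ≤ (y - m) * ((y - m) + (z - m)) := by nlinarith [sq_nonneg (y - m)]
        positivity
      · rw [div_le_iff₀ (by positivity)]
        nlinarith [sq_nonneg (z - m)]
      · have hx' : x = m - ((y - m) + (z - m)) := by linarith
        have hz' : (x + z) / 2 = m - (y - m) / 2 := by linarith
        rw [hz']
        generalize hv : (y - m) + (z - m) = v at *
        rw [hx']
        field_simp
        ring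
  have hxz := hf.2 hms hx (show 0 ≤ 1 - t by linarith) ht0 (by ring)
  have hxy := hf.2 hms hx (show 0 ≤ 1 - (1 / 2 - t) by linarith) (show 0 ≤ 1 / 2 - t by linarith)
    (by ring)
  have hyz := hf.2 hy hz (show (0 : ℝ) ≤ 1 / 2 by norm_num) (show (0 : ℝ) ≤ 1 / 2 by norm_num)
    (by norm_num)
  simp only [smul_eq_mul] at hxz hxy hyz
  rw [← ht] at hxz
  rw [show (1 - (1 / 2 - t)) * m + (1 / 2 - t) * x = (x + y) / 2 by linarith] at hxy
  rw [show 1 / 2 * y + 1 / 2 * z = (y + z) / 2 by ring] at hyz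
  linarith

/-- **Popoviciu's inequality** for concave functions. -/
theorem ConcaveOn.popoviciu {s : Set ℝ} {f : ℝ → ℝ} (hf : ConcaveOn ℝ s f)
    {x y z : ℝ} (hx : x ∈ s) (hy : y ∈ s) (hz : z ∈ s) :
    f x + f y + f z + 3 * f ((x + y + z) / 3) ≤
      2 * (f ((x + y) / 2) + f ((y + z) / 2) + f ((x + z) / 2)) := by
  by_cases h₁ : 0 ≤ (y - (x + y + z) / 3) * (z - (x + y + z) / 3)
  · exact hf.popoviciu_of_same_side hx hy hz h₁
  by_cases h₂ : 0 ≤ (x - (y + x + z) / 3) * (z - (y + x + z) / 3)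
  · have := hf.popoviciu_of_same_side hy hx hz h₂
    rw [add_comm y x] at this
    linarith
  have h₃ : 0 ≤ (y - (z + y + x) / 3) * (x - (z + y + x) / 3) := by
    rw [add_comm y x] at h₂
    rw [show z + y + x = x + y + z by ring]
    by_contra h₃
    nlinarith [mul_pos (mul_pos (neg_pos.2 (not_le.1 h₁)) (neg_pos.2 (not_le.1 h₂)))
      (neg_pos.2 (not_le.1 h₃)), sq_nonneg ((x - (x + y + z) / 3) * (y - (x + y + z) / 3) *
        (z - (x + y + z) / 3))]
  have := hf.popoviciu_of_same_side hz hy hx h₃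
  rw [add_comm z y, add_comm z x, add_comm y x, show y + z + x = x + y + z by ring] at this
  linarith

theorem ConcaveOn.three_mul_map_add_div_three_ge {s : Set ℝ} {f : ℝ → ℝ} (hf : ConcaveOn ℝ s f)
    {x y z : ℝ} (hx : x ∈ s) (hy : y ∈ s) (hz : z ∈ s) :
    f x + f y + f z ≤ 3 * f ((x + y + z) / 3) := by
  have := hf.le_map_sum (t := Finset.univ) (w := fun _ : Fin 3 => (1 / 3 : ℝ))
    (p := ![x, y, z]) (fun _ _ => by norm_num) (by simp) (by
      intro i _
      fin_cases i <;> assumption)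
  simp only [Fin.sum_univ_three, smul_eq_mul, Matrix.cons_val] at this
  rw [show 1 / 3 * x + 1 / 3 * y + 1 / 3 * z = (x + y + z) / 3 by ring] at this
  linarith

theorem sinh_add_div_four_sq (a b : ℝ) :
    Real.sinh ((a + b) / 4) ^ 2 =
      Real.sinh (a / 2) * Real.sinh (b / 2) + Real.sinh ((a - b) / 4) ^ 2 := by
  rw [show (a + b) / 4 = a / 4 + b / 4 by ring, show (a - b) / 4 = a / 4 - b / 4 by ring,
    show a / 2 = 2 * (a / 4) by ring, show b / 2 = 2 * (b / 4) by ring,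
    Real.sinh_add, Real.sinh_sub, Real.sinh_two_mul, Real.sinh_two_mul]
  ring

theorem sinh_half_mul_sinh_half_le (a b : ℝ) :
    Real.sinh (a / 2) * Real.sinh (b / 2) ≤ Real.sinh ((a + b) / 4) ^ 2 := by
  rw [sinh_add_div_four_sq]
  exact le_add_of_nonneg_right (sq_nonneg _)

theorem sinh_half_mul_sinh_half_lt {a b : ℝ} (h : a ≠ b) :
    Real.sinh (a / 2) * Real.sinh (b / 2) < Real.sinh ((a + b) / 4) ^ 2 := by
  rw [sinh_add_div_four_sq]
  have : Real.sinh ((a - b) / 4) ≠ 0 := by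
    rw [Ne, Real.sinh_eq_zero]
    intro h'
    exact h (by linarith)
  exact lt_add_of_pos_right _ (by positivity)

theorem sinh_half_prod_le {a b c : ℝ} (ha : 0 < a) (hb : 0 < b) (hc : 0 < c) :
    Real.sinh (a / 2) * Real.sinh (b / 2) * Real.sinh (c / 2) ≤
      Real.sinh ((a + b) / 4) * Real.sinh ((a + c) / 4) * Real.sinh ((b + c) / 4) := by
  have ha' := Real.sinh_pos_iff.2 (half_pos ha)
  have hb' := Real.sinh_pos_iff.2 (half_pos hb)
  have hc' := Real.sinh_pos_iff.2 (half_pos hc)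
  have hab := Real.sinh_pos_iff.2 (show 0 < (a + b) / 4 by positivity)
  have hac := Real.sinh_pos_iff.2 (show 0 < (a + c) / 4 by positivity)
  have hbc := Real.sinh_pos_iff.2 (show 0 < (b + c) / 4 by positivity)
  refine (sq_le_sq₀ (by positivity) (by positivity)).1 ?_
  calc _ = (Real.sinh (a / 2) * Real.sinh (b / 2)) * (Real.sinh (a / 2) * Real.sinh (c / 2)) *
        (Real.sinh (b / 2) * Real.sinh (c / 2)) := by ring
    _ ≤ Real.sinh ((a + b) / 4) ^ 2 * Real.sinh ((a + c) / 4) ^ 2 *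
        Real.sinh ((b + c) / 4) ^ 2 := by
      gcongr <;> exact sinh_half_mul_sinh_half_le _ _
    _ = _ := by ring

theorem eq_of_sinh_half_prod_eq {a b c : ℝ} (ha : 0 < a) (hb : 0 < b) (hc : 0 < c)
    (h : Real.sinh ((a + b) / 4) * Real.sinh ((a + c) / 4) * Real.sinh ((b + c) / 4) =
      Real.sinh (a / 2) * Real.sinh (b / 2) * Real.sinh (c / 2)) : a = b := by
  have ha' := Real.sinh_pos_iff.2 (half_pos ha)
  have hb' := Real.sinh_pos_iff.2 (half_pos hb)
  have hc' := Real.sinh_pos_iff.2 (half_pos hc)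
  by_contra hne
  have hlt : (Real.sinh (a / 2) * Real.sinh (b / 2)) *
      ((Real.sinh (a / 2) * Real.sinh (c / 2)) * (Real.sinh (b / 2) * Real.sinh (c / 2))) <
      Real.sinh ((a + b) / 4) ^ 2 *
        (Real.sinh ((a + c) / 4) ^ 2 * Real.sinh ((b + c) / 4) ^ 2) :=
    mul_lt_mul (sinh_half_mul_sinh_half_lt hne)
      (mul_le_mul (sinh_half_mul_sinh_half_le _ _) (sinh_half_mul_sinh_half_le _ _)
        (by positivity) (by positivity)) (by positivity) (by positivity)
  have hsq := congrArg (· ^ 2) h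
  simp only [mul_pow] at hsq
  linarith

theorem sinh_triangle_prod_le {a b c : ℝ} (hab : a < b + c) (hbc : b < a + c) (hca : c < a + b) :
    (Real.sinh ((a + b) / 4) * Real.sinh ((a + c) / 4) * Real.sinh ((b + c) / 4)) *
      (Real.sinh ((a + b - c) / 2) * Real.sinh ((a + c - b) / 2) *
        Real.sinh ((b + c - a) / 2)) ≤
      (Real.sinh (a / 2) * Real.sinh (b / 2) * Real.sinh (c / 2)) ^ 2 := by
  have ha : 0 < a / 2 := by linarith
  have hb : 0 < b / 2 := by linarith
  have hc : 0 < c / 2 := by linarith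
  have hx : 0 < (b + c - a) / 2 := by linarith
  have hy : 0 < (a + c - b) / 2 := by linarith
  have hz : 0 < (a + b - c) / 2 := by linarith
  have hp : 0 < (a + b) / 4 := by linarith
  have hq : 0 < (a + c) / 4 := by linarith
  have hr : 0 < (b + c) / 4 := by linarith
  have hpop := concaveOn_log_sinh.popoviciu hx hy hz
  have hjensen := concaveOn_log_sinh.three_mul_map_add_div_three_ge hp hq hr
  rw [show ((b + c - a) / 2 + (a + c - b) / 2 + (a + b - c) / 2) / 3 = (a + b + c) / 6 by ring,
    show ((b + c - a) / 2 + (a + c - b) / 2) / 2 = c / 2 by ring,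
    show ((a + c - b) / 2 + (a + b - c) / 2) / 2 = a / 2 by ring,
    show ((b + c - a) / 2 + (a + b - c) / 2) / 2 = b / 2 by ring] at hpop
  rw [show ((a + b) / 4 + (a + c) / 4 + (b + c) / 4) / 3 = (a + b + c) / 6 by ring] at hjensen
  rw [← Real.sinh_pos_iff] at ha hb hc hx hy hz hp hq hr
  rw [← Real.log_le_log_iff (by positivity) (by positivity), Real.log_pow,
    Real.log_mul (by positivity) (by positivity), Real.log_mul (by positivity) (by positivity),
    Real.log_mul (by positivity) (by positivity), Real.log_mul (by positivity) (by positivity),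
    Real.log_mul (by positivity) (by positivity), Real.log_mul (by positivity) (by positivity),
    Real.log_mul (by positivity) (by positivity)]
  push_cast
  linarith

theorem stmt_11 (a b c : ℝ) (ha : 0 < a) (hb : 0 < b) (hc : 0 < c)
    (hab : a < b + c) (hbc : b < a + c) (hca : c < a + b) :
    2 * Real.sinh (a / 2) * Real.sinh (b / 2) * Real.sinh (c / 2) /
        (Real.sinh ((a + b - c) / 2) * Real.sinh ((a + c - b) / 2) *
          Real.sinh ((b + c - a) / 2)) ≥
      2 * Real.sinh ((a + b) / 4) * Real.sinh ((a + c) / 4) * Real.sinh ((b + c) / 4) /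
        (Real.sinh (a / 2) * Real.sinh (b / 2) * Real.sinh (c / 2)) ∧
    2 * Real.sinh ((a + b) / 4) * Real.sinh ((a + c) / 4) * Real.sinh ((b + c) / 4) /
        (Real.sinh (a / 2) * Real.sinh (b / 2) * Real.sinh (c / 2)) ≥ 2 ∧
    ((2 * Real.sinh (a / 2) * Real.sinh (b / 2) * Real.sinh (c / 2) /
        (Real.sinh ((a + b - c) / 2) * Real.sinh ((a + c - b) / 2) *
          Real.sinh ((b + c - a) / 2)) =
      2 * Real.sinh ((a + b) / 4) * Real.sinh ((a + c) / 4) * Real.sinh ((b + c) / 4) /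
        (Real.sinh (a / 2) * Real.sinh (b / 2) * Real.sinh (c / 2)) ∧
      2 * Real.sinh ((a + b) / 4) * Real.sinh ((a + c) / 4) * Real.sinh ((b + c) / 4) /
        (Real.sinh (a / 2) * Real.sinh (b / 2) * Real.sinh (c / 2)) = 2) ↔
      a = b ∧ b = c) := by
  have ha' := Real.sinh_pos_iff.2 (half_pos ha)
  have hb' := Real.sinh_pos_iff.2 (half_pos hb)
  have hc' := Real.sinh_pos_iff.2 (half_pos hc)
  have hx := Real.sinh_pos_iff.2 (show 0 < (b + c - a) / 2 by linarith)
  have hy := Real.sinh_pos_iff.2 (show 0 < (a + c - b) / 2 by linarith)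
  have hz := Real.sinh_pos_iff.2 (show 0 < (a + b - c) / 2 by linarith)
  refine ⟨?_, ?_, ?_, ?_⟩
  · rw [ge_iff_le, div_le_div_iff₀ (by positivity) (by positivity)]
    linarith [sinh_triangle_prod_le hab hbc hca]
  · rw [ge_iff_le, le_div_iff₀ (by positivity)]
    linarith [sinh_half_prod_le ha hb hc]
  · rintro ⟨-, h⟩
    rw [div_eq_iff (by positivity)] at h
    refine ⟨eq_of_sinh_half_prod_eq ha hb hc (by linarith),
      eq_of_sinh_half_prod_eq hb hc ha ?_⟩
    rw [add_comm b a, add_comm c a]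
    linarith
  · rintro ⟨rfl, rfl⟩
    rw [show (a + a - a) / 2 = a / 2 by ring, show (a + a) / 4 = a / 2 by ring]
    have : 2 * Real.sinh (a / 2) * Real.sinh (a / 2) * Real.sinh (a / 2) /
        (Real.sinh (a / 2) * Real.sinh (a / 2) * Real.sinh (a / 2)) = 2 := by
      field_simp
    exact ⟨rfl, this⟩
end

section
/- Let a, b, c be positive real numbers satisfying the strict triangle inequalities a < b + c, b < a + c, c < a + b. Then (sinh(a/2)·sinh(b/2)·sinh(c/2))² ≥ sinh((a+b-c)/2)·sinh((a+c-b)/2)·sinh((b+c-a)/2)·sinh((a+b)/4)·sinh((a+c)/4)·sinh((b+c)/4). -/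
lemma coth_antitone {u v : ℝ} (hu : 0 < u) (huv : u ≤ v) :
    Real.cosh v / Real.sinh v ≤ Real.cosh u / Real.sinh u := by
  have hsu := Real.sinh_pos_iff.2 hu
  have hsv := Real.sinh_pos_iff.2 (hu.trans_le huv)
  rw [div_le_div_iff₀ hsv hsu]
  have h := Real.sinh_nonneg_iff.2 (sub_nonneg.2 huv)
  rw [Real.sinh_sub] at h
  linarith

lemma hasDerivAt_log_sinh {x : ℝ} (hx : 0 < x) :
    HasDerivAt (fun t => Real.log (Real.sinh t)) (Real.cosh x / Real.sinh x) x :=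
  (Real.hasDerivAt_sinh x).log (Real.sinh_pos_iff.2 hx).ne'

lemma exists_log_sinh_sub_eq {u v : ℝ} (hu : 0 < u) (huv : u < v) :
    ∃ w ∈ Set.Ioo u v, Real.log (Real.sinh v) - Real.log (Real.sinh u) =
      Real.cosh w / Real.sinh w * (v - u) := by
  obtain ⟨w, hw, h⟩ := exists_hasDerivAt_eq_slope (fun t => Real.log (Real.sinh t))
    (fun t => Real.cosh t / Real.sinh t) huv
    (fun x hx => (hasDerivAt_log_sinh (hu.trans_le hx.1)).continuousAt.continuousWithinAt)
    (fun x hx => hasDerivAt_log_sinh (hu.trans hx.1))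
  refine ⟨w, hw, ?_⟩
  rw [h, div_mul_cancel₀ _ (sub_pos.2 huv).ne']

/-- The tangent line inequality for the concave function `log ∘ sinh` on the positive reals. -/
lemma log_sinh_le_add_coth_mul {u v : ℝ} (hu : 0 < u) (hv : 0 < v) :
    Real.log (Real.sinh v) ≤
      Real.log (Real.sinh u) + Real.cosh u / Real.sinh u * (v - u) := by
  rcases lt_trichotomy u v with h | rfl | h
  · obtain ⟨w, hw, he⟩ := exists_log_sinh_sub_eq hu h
    have := mul_le_mul_of_nonneg_right (coth_antitone hu hw.1.le) (sub_pos.2 h).le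
    linarith
  · simp
  · obtain ⟨w, hw, he⟩ := exists_log_sinh_sub_eq hv h
    have := mul_le_mul_of_nonneg_right (coth_antitone (hv.trans hw.1) hw.2.le) (sub_pos.2 h).le
    linarith

/-- The inequality for ordered sides: the arguments on the right, paired up suitably, majorize
those on the left, and `log ∘ sinh` is concave. -/
lemma sinh_triangle_of_le {a b c : ℝ} (hc : 0 < c) (hcb : c ≤ b) (hba : b ≤ a)
    (hab : a < b + c) :
    Real.sinh ((a + b - c) / 2) * Real.sinh ((a + c - b) / 2) *
        Real.sinh ((b + c - a) / 2) *
        Real.sinh ((a + b) / 4) * Real.sinh ((a + c) / 4) * Real.sinh ((b + c) / 4) ≤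
      (Real.sinh (a / 2) * Real.sinh (b / 2) * Real.sinh (c / 2)) ^ 2 := by
  have hc' : 0 < c / 2 := by linarith
  have hb' : 0 < b / 2 := by linarith
  have ha' : 0 < a / 2 := by linarith
  have h₁ : 0 < (a + b - c) / 2 := by linarith
  have h₂ : 0 < (a + c - b) / 2 := by linarith
  have h₃ : 0 < (b + c - a) / 2 := by linarith
  have h₄ : 0 < (a + b) / 4 := by linarith
  have h₅ : 0 < (a + c) / 4 := by linarith
  have h₆ : 0 < (b + c) / 4 := by linarith
  have hfab := coth_antitone hb' (by linarith : b / 2 ≤ a / 2)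
  have hfbc := coth_antitone hc' (by linarith : c / 2 ≤ b / 2)
  have sa := Real.sinh_pos_iff.2 ha'
  have sb := Real.sinh_pos_iff.2 hb'
  have sc := Real.sinh_pos_iff.2 hc'
  have s₁ := Real.sinh_pos_iff.2 h₁
  have s₂ := Real.sinh_pos_iff.2 h₂
  have s₃ := Real.sinh_pos_iff.2 h₃
  have s₄ := Real.sinh_pos_iff.2 h₄
  have s₅ := Real.sinh_pos_iff.2 h₅
  have s₆ := Real.sinh_pos_iff.2 h₆
  rw [← Real.log_le_log_iff (by positivity) (by positivity), Real.log_pow,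
    Real.log_mul (by positivity) (by positivity), Real.log_mul (by positivity) (by positivity),
    Real.log_mul (by positivity) (by positivity), Real.log_mul (by positivity) (by positivity),
    Real.log_mul (by positivity) (by positivity), Real.log_mul (by positivity) (by positivity),
    Real.log_mul (by positivity) (by positivity)]
  push_cast
  rcases le_total (4 * b) (2 * a + b + c) with h | h
  · have t₁ := log_sinh_le_add_coth_mul ha' h₁
    have t₂ := log_sinh_le_add_coth_mul ha' h₂
    have t₃ := log_sinh_le_add_coth_mul hc' h₃
    have t₄ := log_sinh_le_add_coth_mul hb' h₄
    have t₅ := log_sinh_le_add_coth_mul hb' h₅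
    have t₆ := log_sinh_le_add_coth_mul hc' h₆
    have := mul_nonneg (sub_nonneg.2 hfbc) (sub_nonneg.2 h)
    linarith
  · have t₁ := log_sinh_le_add_coth_mul ha' h₁
    have t₂ := log_sinh_le_add_coth_mul hc' h₂
    have t₃ := log_sinh_le_add_coth_mul hc' h₃
    have t₄ := log_sinh_le_add_coth_mul ha' h₄
    have t₅ := log_sinh_le_add_coth_mul hb' h₅
    have t₆ := log_sinh_le_add_coth_mul hb' h₆
    have := mul_nonneg (sub_nonneg.2 hfab) (by linarith : 0 ≤ 3 * b - a - 2 * c)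
    linarith

theorem stmt_13 (a b c : ℝ) (ha : 0 < a) (hb : 0 < b) (hc : 0 < c)
    (hab : a < b + c) (hbc : b < a + c) (hca : c < a + b) :
    (Real.sinh (a / 2) * Real.sinh (b / 2) * Real.sinh (c / 2)) ^ 2 ≥
      Real.sinh ((a + b - c) / 2) * Real.sinh ((a + c - b) / 2) *
        Real.sinh ((b + c - a) / 2) *
        Real.sinh ((a + b) / 4) * Real.sinh ((a + c) / 4) * Real.sinh ((b + c) / 4) := by
  rcases le_total a b with h₁ | h₁ <;> rcases le_total b c with h₂ | h₂ <;>
    rcases le_total a c with h₃ | h₃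
  · have := sinh_triangle_of_le ha h₁ h₂ (by linarith)
    ring_nf at this ⊢
    linarith
  · have := sinh_triangle_of_le ha h₁ h₂ (by linarith)
    ring_nf at this ⊢
    linarith
  · have := sinh_triangle_of_le ha h₃ h₂ (by linarith)
    ring_nf at this ⊢
    linarith
  · have := sinh_triangle_of_le hc h₃ h₁ (by linarith)
    ring_nf at this ⊢
    linarith
  · have := sinh_triangle_of_le hb h₁ h₃ (by linarith)
    ring_nf at this ⊢
    linarith
  · have := sinh_triangle_of_le hb h₂ h₃ (by linarith)
    ring_nf at this ⊢
    linarith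
  · have := sinh_triangle_of_le hc h₂ h₁ (by linarith)
    ring_nf at this ⊢
    linarith
  · have := sinh_triangle_of_le hc h₂ h₁ (by linarith)
    ring_nf at this ⊢
    linarith
end

section
/- Let a, b, c be positive real numbers satisfying the strict triangle inequalities a < b + c, b < a + c, c < a + b, and write hₐ = sinh(a/2), h_b = sinh(b/2), h_c = sinh(c/2). Then (hₐ·h_b·h_c + hₐ³ + h_b³ + h_c³)/(2·hₐ·h_b·h_c) ≥ (1/2)(hₐ/h_b + h_b/hₐ + hₐ/h_c + h_c/hₐ + h_b/h_c + h_c/h_b) − 1 ≥ (1/3)(hₐ/h_b + h_b/hₐ + hₐ/h_c + h_c/hₐ + h_b/h_c + h_c/h_b) ≥ 2. -/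
/-- Schur's inequality of degree one, in expanded form. -/
theorem schur_cubic {x y z : ℝ} (hx : 0 ≤ x) (hy : 0 ≤ y) (hz : 0 ≤ z) :
    x ^ 2 * y + x * y ^ 2 + x ^ 2 * z + x * z ^ 2 + y ^ 2 * z + y * z ^ 2 ≤
      x ^ 3 + y ^ 3 + z ^ 3 + 3 * (x * y * z) := by
  rcases le_total x y with hxy | hxy <;> rcases le_total y z with hyz | hyz <;>
    rcases le_total x z with hxz | hxz <;>
    nlinarith [mul_nonneg (sub_nonneg.2 hxy) (sub_nonneg.2 hyz),
      mul_nonneg (sub_nonneg.2 hxy) (sub_nonneg.2 hxz),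
      mul_nonneg (sub_nonneg.2 hyz) (sub_nonneg.2 hxz),
      mul_nonneg hx (sq_nonneg (y - z)), mul_nonneg hy (sq_nonneg (x - z)),
      mul_nonneg hz (sq_nonneg (x - y)), mul_self_nonneg (x + y - z),
      mul_self_nonneg (x - y + z), mul_self_nonneg (y + z - x)]

/-- The six ratios of three positive numbers sum to at least six. -/
theorem six_le_sum_ratios {x y z : ℝ} (hx : 0 < x) (hy : 0 < y) (hz : 0 < z) :
    6 ≤ x / y + y / x + x / z + z / x + y / z + z / y := by
  have two_le {u v : ℝ} (hu : 0 < u) (hv : 0 < v) : 2 ≤ u / v + v / u := by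
    rw [div_add_div _ _ hv.ne' hu.ne', le_div_iff₀ (mul_pos hv hu)]
    nlinarith [sq_nonneg (u - v)]
  linarith [two_le hx hy, two_le hx hz, two_le hy hz]

/-- Schur's inequality in terms of ratios. -/
theorem sum_ratios_le {x y z : ℝ} (hx : 0 < x) (hy : 0 < y) (hz : 0 < z) :
    1 / 2 * (x / y + y / x + x / z + z / x + y / z + z / y) - 1 ≤
      (x * y * z + x ^ 3 + y ^ 3 + z ^ 3) / (2 * x * y * z) := by
  have ratios_eq : 1 / 2 * (x / y + y / x + x / z + z / x + y / z + z / y) - 1 =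
      (x ^ 2 * y + x * y ^ 2 + x ^ 2 * z + x * z ^ 2 + y ^ 2 * z + y * z ^ 2
        - 2 * (x * y * z)) / (2 * x * y * z) := by
    field_simp
    ring
  rw [ratios_eq]
  gcongr
  linarith [schur_cubic hx.le hy.le hz.le]

theorem stmt_19 (a b c : ℝ) (ha : 0 < a) (hb : 0 < b) (hc : 0 < c)
    (hab : a < b + c) (hbc : b < a + c) (hca : c < a + b) :
    let ha' := Real.sinh (a / 2)
    let hb' := Real.sinh (b / 2)
    let hc' := Real.sinh (c / 2)
    (ha' * hb' * hc' + ha' ^ 3 + hb' ^ 3 + hc' ^ 3) / (2 * ha' * hb' * hc') ≥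
      1 / 2 * (ha' / hb' + hb' / ha' + ha' / hc' + hc' / ha' + hb' / hc' + hc' / hb') - 1 ∧
    1 / 2 * (ha' / hb' + hb' / ha' + ha' / hc' + hc' / ha' + hb' / hc' + hc' / hb') - 1 ≥
      1 / 3 * (ha' / hb' + hb' / ha' + ha' / hc' + hc' / ha' + hb' / hc' + hc' / hb') ∧
    1 / 3 * (ha' / hb' + hb' / ha' + ha' / hc' + hc' / ha' + hb' / hc' + hc' / hb') ≥ 2 := by
  intro x y z
  have hx : 0 < x := Real.sinh_pos_iff.2 (half_pos ha)
  have hy : 0 < y := Real.sinh_pos_iff.2 (half_pos hb)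
  have hz : 0 < z := Real.sinh_pos_iff.2 (half_pos hc)
  have six_le := six_le_sum_ratios hx hy hz
  exact ⟨sum_ratios_le hx hy hz, by linarith, by linarith⟩
end
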